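/- Let (G_n) be a sequence of connected d-regular simple graphs on n vertices with d = d(n) → ∞ and ε = ε(n) ∈ (0,1), satisfying properties P1, P2 and P3. Then there exist a constant C and n₀ such that for all n ≥ n₀ and every vertex v of G_n, the expected number of visits to v within the mixing time by the lazy walk started at v satisfies |R_v − 2 − 2/d| ≤ C/d². -/

import Mathlib

open Finset Filter

noncomputable section
open scoped Classical

variable {V : Type*} [Fintype V] [DecidableEq V]

/-- Transition matrix of the simple random walk on a `d`-regular graph `G`:
from `u` the walk moves to a uniformly random neighbour. -/
def simpleStep (G : SimpleGraph V) (d : ℕ) : Matrix V V ℝ :=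
  Matrix.of fun u v => if G.Adj u v then ((d : ℝ))⁻¹ else 0

/-- Transition matrix of the lazy random walk `M = (1/2)(I + A/d)`. -/
def lazyStep (G : SimpleGraph V) (d : ℕ) : Matrix V V ℝ :=
  Matrix.of fun u v =>
    (if u = v then (2 : ℝ)⁻¹ else 0) + (2 : ℝ)⁻¹ * (if G.Adj u v then ((d : ℝ))⁻¹ else 0)

/-- Probability that the first `t` steps of the Markov chain with transition
matrix `M` started at `u` form a trajectory satisfying `E`:  the sum, over all
paths realizing the event, of the product of the transition probabilities. -/
def walkProb (M : Matrix V V ℝ) (u : V) (t : ℕ)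
    (E : (Fin (t + 1) → V) → Prop) : ℝ :=
  ∑ p : Fin (t + 1) → V,
    if p 0 = u ∧ E p then ∏ i : Fin t, M (p i.castSucc) (p i.succ) else 0

/-- The mixing time `T = min { t ≥ 1 : |M^t x y - 1/n| ≤ n⁻³ for all x,y }`. -/
def mixingTime (G : SimpleGraph V) (d : ℕ) : ℕ :=
  sInf {T : ℕ | 1 ≤ T ∧ ∀ x y : V,
    |((lazyStep G d) ^ T) x y - ((Fintype.card V : ℝ))⁻¹| ≤ (((Fintype.card V : ℝ)) ^ 3)⁻¹}

/-- Property P1: the second largest eigenvalue of the lazy walk matrix is at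
most `1 - g`, stated via the Rayleigh quotient on the orthogonal complement of
the constant (top) eigenvector. -/
def SpectralGapLB (G : SimpleGraph V) (d : ℕ) (g : ℝ) : Prop :=
  ∀ x : V → ℝ, (∑ v : V, x v) = 0 →
    (∑ u : V, ∑ v : V, x u * lazyStep G d u v * x v) ≤ (1 - g) * ∑ v : V, x v ^ 2

/-- Property P3 with constant `ρ₂`: for vertices `u,v` at distance at most
`d^ε`, the number of neighbours `w` of `v` with `dist w u ≤ dist u v` is at
most `ρ₂ · dist u v`. -/
def PropP3 (G : SimpleGraph V) (d : ℕ) (ε ρ₂ : ℝ) : Prop :=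
  ∀ u v : V, (G.dist u v : ℝ) ≤ (d : ℝ) ^ ε →
    (((univ : Finset V).filter fun w => G.Adj v w ∧ G.dist w u ≤ G.dist u v).card : ℝ) ≤
      ρ₂ * (G.dist u v : ℝ)

/-- The number of edges of `G` with both endpoints in `S`. -/
def edgesInside (G : SimpleGraph V) (S : Finset V) : ℕ :=
  ((S ×ˢ S).filter fun p => G.Adj p.1 p.2).card / 2

/-- The set of vertices of `G` not visited by the trajectory `p` at any step
`s` with `t₀ ≤ s` contains a connected (in the induced subgraph) subset of at
least `K` vertices; equivalently, the subgraph induced by this vacant set has a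
connected component with at least `K` vertices. -/
def bigVacantComponent (G : SimpleGraph V) {t : ℕ} (p : Fin (t + 1) → V)
    (t₀ : ℕ) (K : ℝ) : Prop :=
  ∃ S : Finset V, (∀ v ∈ S, ∀ s : Fin (t + 1), t₀ ≤ (s : ℕ) → p s ≠ v) ∧
    (G.induce (S : Set V)).Connected ∧ K ≤ (S.card : ℝ)

/-!
Write `P` for the simple step and `M = (1 + P) / 2` for the lazy one. Since `1 - P = 2 (1 - M)`,
telescoping both geometric series gives, for all `K` and `m`,
`∑_{k < K} M ^ k = 2 ∑_{j < m} P ^ j - 2 ∑_{j < m} M ^ K P ^ j + ∑_{k < K} M ^ k P ^ m`,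
so up to two error terms `R_v` is twice the expected number of visits of the simple walk to its
starting point in boundedly many steps.

By P3 all but a bounded number of the `d` neighbours of a vertex near `v` are farther from `v`
than that vertex is. A closed walk of length `t` makes at least `t / 2` steps that do not lead
farther away, hence `(P ^ t) v v = O(d ^ (-⌈t / 2⌉))`: the times `0` and `2` contribute `1 + 1 / d`,
and the other bounded times `O(1 / d ^ 2)`.

Take `K = T + 1` and `m = 10`. The entries of `M ^ K` are at most `2 / n`. On functions of sum zero
the spectral gap bounds `∑_k M ^ k` by `d ^ 3 / c₁`, so the last error term is at most
`K / n + (P ^ 10) v v * d ^ 3 / c₁`. As `(P ^ 10) v v = O(d ^ (-5))` and `K = O(d ^ 3 log n)`, P2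
makes every error `O(1 / d ^ 2)`.
-/

section Matrices
open Matrix

section QuadraticForms
variable {ι : Type*} [Fintype ι] {M : Matrix ι ι ℝ} {g : ℝ}

lemma mulVec_dotProduct_of_isSymm (hM : M.IsSymm) (x y : ι → ℝ) :
    (M *ᵥ x) ⬝ᵥ y = x ⬝ᵥ (M *ᵥ y) := by
  rw [dotProduct_mulVec, ← mulVec_transpose, hM.eq]

lemma sq_dotProduct_mulVec_le_of_posSemidef (hM : M.PosSemidef) (x y : ι → ℝ) :
    (x ⬝ᵥ (M *ᵥ y)) ^ 2 ≤ (x ⬝ᵥ (M *ᵥ x)) * (y ⬝ᵥ (M *ᵥ y)) := by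
  have hsymm : y ⬝ᵥ (M *ᵥ x) = x ⬝ᵥ (M *ᵥ y) := by
    rw [dotProduct_comm, mulVec_dotProduct_of_isSymm (isHermitian_iff_isSymm.1 hM.isHermitian)]
  have h := (toBilin' M).apply_mul_apply_le_of_forall_zero_le
    (fun z => by simpa [toBilin'_apply'] using hM.dotProduct_mulVec_nonneg z) x y
  simpa only [toBilin'_apply', hsymm, ← sq] using h

/-- The Rayleigh quotient of `M` on the vectors of sum zero is at most `1 - g`. For a symmetric
doubly stochastic `M` this says that its second largest eigenvalue is at most `1 - g`. -/
def HasSpectralGap (M : Matrix ι ι ℝ) (g : ℝ) : Prop :=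
  ∀ x : ι → ℝ, ∑ i, x i = 0 → x ⬝ᵥ (M *ᵥ x) ≤ (1 - g) * (x ⬝ᵥ x)

lemma HasSpectralGap.mono {g' : ℝ} (hM : HasSpectralGap M g) (hg : g' ≤ g) :
    HasSpectralGap M g' := by
  intro x hx
  have hxx : 0 ≤ x ⬝ᵥ x := dotProduct_self_star_nonneg x
  exact (hM x hx).trans (by gcongr)

lemma HasSpectralGap.le_one [Nontrivial ι] (hM : M.PosSemidef) (hgap : HasSpectralGap M g) :
    g ≤ 1 := by
  obtain ⟨i, j, hij⟩ := exists_pair_ne ι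
  set x : ι → ℝ := Pi.single i 1 - Pi.single j 1
  have hx : x ≠ 0 := fun h => by simpa [x, hij] using congr_fun h i
  have hpos : 0 < x ⬝ᵥ x := dotProduct_self_star_pos_iff.2 hx
  have h := (hM.dotProduct_mulVec_nonneg x).trans (hgap x (by simp [x]))
  linarith [nonneg_of_mul_nonneg_left h hpos]

end QuadraticForms

section DoublyStochastic
variable {ι : Type*} [Fintype ι] [DecidableEq ι] {M P Q : Matrix ι ι ℝ} {g : ℝ}

lemma mul_apply_le_of_mem_doublyStochastic {a : ℝ} (hM : ∀ i j, M i j ≤ a)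
    (hQ : Q ∈ doublyStochastic ℝ ι) (i j : ι) : (M * Q) i j ≤ a := by
  calc (M * Q) i j = ∑ k, M i k * Q k j := mul_apply
    _ ≤ ∑ k, a * Q k j := by
        gcongr with k
        · exact nonneg_of_mem_doublyStochastic hQ
        · exact hM i k
    _ = a := by rw [← mul_sum, sum_col_of_mem_doublyStochastic hQ, mul_one]

/-- The point mass at `v` minus the uniform distribution, that is, the orthogonal projection of
the basis vector at `v` to the vectors of sum zero. -/
def centeredSingle (v : ι) : ι → ℝ :=
  Pi.single v 1 - (Fintype.card ι : ℝ)⁻¹ • 1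

lemma sum_centeredSingle (v : ι) : ∑ i, centeredSingle v i = 0 := by
  have hcard : (Fintype.card ι : ℝ) ≠ 0 :=
    Nat.cast_ne_zero.2 (Fintype.card_pos_iff.2 ⟨v⟩).ne'
  simp [centeredSingle, hcard]

lemma centeredSingle_dotProduct_mulVec (hQ : Q ∈ doublyStochastic ℝ ι) (u v : ι) :
    centeredSingle u ⬝ᵥ (Q *ᵥ centeredSingle v) = Q u v - (Fintype.card ι : ℝ)⁻¹ := by
  have hmulVec : Q *ᵥ centeredSingle v = Q.col v - (Fintype.card ι : ℝ)⁻¹ • 1 := by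
    rw [centeredSingle, mulVec_sub, mulVec_smul, mulVec_one_of_mem_doublyStochastic hQ,
      mulVec_single_one]
  have hsum : (1 : ι → ℝ) ⬝ᵥ (Q *ᵥ centeredSingle v) = 0 := by
    rw [one_dotProduct, sum_mulVec_of_mem_doublyStochastic hQ, sum_centeredSingle]
  nth_rw 1 [centeredSingle]
  rw [sub_dotProduct, smul_dotProduct, hsum, hmulVec]
  simp

lemma centeredSingle_dotProduct_self (v : ι) :
    centeredSingle v ⬝ᵥ centeredSingle v = 1 - (Fintype.card ι : ℝ)⁻¹ := by
  simpa using centeredSingle_dotProduct_mulVec (one_mem (doublyStochastic ℝ ι)) v v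

lemma dotProduct_pow_mulVec_nonneg (hM : M.PosSemidef) (k : ℕ) (x : ι → ℝ) :
    0 ≤ x ⬝ᵥ (M ^ k *ᵥ x) :=
  (hM.pow k).dotProduct_mulVec_nonneg x

lemma mulVec_dotProduct_self_le (hM : M ∈ doublyStochastic ℝ ι) (hpos : M.PosSemidef)
    (hgap : HasSpectralGap M g) {x : ι → ℝ} (hx : ∑ i, x i = 0) :
    (M *ᵥ x) ⬝ᵥ (M *ᵥ x) ≤ (1 - g) * (x ⬝ᵥ (M *ᵥ x)) := by
  set y := M *ᵥ x
  have hy : ∑ i, y i = 0 := by rw [sum_mulVec_of_mem_doublyStochastic hM, hx]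
  have hxMx : 0 ≤ x ⬝ᵥ y := hpos.dotProduct_mulVec_nonneg x
  have hsq : (y ⬝ᵥ y) ^ 2 ≤ (1 - g) * (x ⬝ᵥ y) * (y ⬝ᵥ y) :=
    calc (y ⬝ᵥ y) ^ 2 = (x ⬝ᵥ (M *ᵥ y)) ^ 2 := by
          rw [← mulVec_dotProduct_of_isSymm (isHermitian_iff_isSymm.1 hpos.isHermitian) x y]
      _ ≤ (x ⬝ᵥ y) * (y ⬝ᵥ (M *ᵥ y)) := sq_dotProduct_mulVec_le_of_posSemidef hpos x y
      _ ≤ (x ⬝ᵥ y) * ((1 - g) * (y ⬝ᵥ y)) := by gcongr; exact hgap y hy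
      _ = (1 - g) * (x ⬝ᵥ y) * (y ⬝ᵥ y) := by ring
  rcases eq_or_ne y 0 with hy0 | hy0
  · simp [hy0]
  · have hyy : 0 < y ⬝ᵥ y := dotProduct_self_star_pos_iff.2 hy0
    exact le_of_mul_le_mul_right (by rwa [← sq]) hyy

lemma dotProduct_pow_succ_mulVec_le (hM : M ∈ doublyStochastic ℝ ι) (hpos : M.PosSemidef)
    (hgap : HasSpectralGap M g) (k : ℕ) {x : ι → ℝ} (hx : ∑ i, x i = 0) :
    x ⬝ᵥ (M ^ (k + 1) *ᵥ x) ≤ (1 - g) * (x ⬝ᵥ (M ^ k *ᵥ x)) := by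
  have hsymm : M.IsSymm := isHermitian_iff_isSymm.1 hpos.isHermitian
  have hstep (k : ℕ) (x : ι → ℝ) :
      x ⬝ᵥ (M ^ (k + 2) *ᵥ x) = (M *ᵥ x) ⬝ᵥ (M ^ k *ᵥ (M *ᵥ x)) := by
    rw [mulVec_dotProduct_of_isSymm hsymm, mulVec_mulVec, mulVec_mulVec, ← pow_succ', ← pow_succ]
  induction k using Nat.twoStepInduction generalizing x with
  | zero => simpa using hgap x hx
  | one => simpa [hstep 0] using mulVec_dotProduct_self_le hM hpos hgap hx
  | more k ih _ =>
    rw [hstep (k + 1), hstep k]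
    exact ih (by rw [sum_mulVec_of_mem_doublyStochastic hM, hx])

lemma dotProduct_pow_mulVec_le (hM : M ∈ doublyStochastic ℝ ι) (hpos : M.PosSemidef)
    (hgap : HasSpectralGap M g) (hg : g ≤ 1) (k : ℕ) {x : ι → ℝ} (hx : ∑ i, x i = 0) :
    x ⬝ᵥ (M ^ k *ᵥ x) ≤ (1 - g) ^ k * (x ⬝ᵥ x) := by
  induction k with
  | zero => simp
  | succ k ih =>
    calc x ⬝ᵥ (M ^ (k + 1) *ᵥ x) ≤ (1 - g) * (x ⬝ᵥ (M ^ k *ᵥ x)) :=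
          dotProduct_pow_succ_mulVec_le hM hpos hgap k hx
      _ ≤ (1 - g) * ((1 - g) ^ k * (x ⬝ᵥ x)) :=
          mul_le_mul_of_nonneg_left ih (sub_nonneg.2 hg)
      _ = (1 - g) ^ (k + 1) * (x ⬝ᵥ x) := by ring

lemma sum_dotProduct_pow_mulVec_le (hM : M ∈ doublyStochastic ℝ ι) (hpos : M.PosSemidef)
    (hgap : HasSpectralGap M g) (hg : 0 < g) (K : ℕ) {x : ι → ℝ} (hx : ∑ i, x i = 0) :
    ∑ k ∈ range K, x ⬝ᵥ (M ^ k *ᵥ x) ≤ (x ⬝ᵥ x) / g := by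
  rw [le_div_iff₀' hg, mul_sum]
  calc ∑ k ∈ range K, g * (x ⬝ᵥ (M ^ k *ᵥ x))
      ≤ ∑ k ∈ range K, (x ⬝ᵥ (M ^ k *ᵥ x) - x ⬝ᵥ (M ^ (k + 1) *ᵥ x)) := by
        gcongr with k
        linarith [dotProduct_pow_succ_mulVec_le hM hpos hgap k hx]
    _ = x ⬝ᵥ x - x ⬝ᵥ (M ^ K *ᵥ x) := by
        rw [sum_range_sub' fun k => x ⬝ᵥ (M ^ k *ᵥ x), pow_zero, one_mulVec]
    _ ≤ x ⬝ᵥ x := sub_le_self _ (dotProduct_pow_mulVec_nonneg hpos K x)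

lemma abs_pow_apply_sub_inv_card_le (hM : M ∈ doublyStochastic ℝ ι) (hpos : M.PosSemidef)
    (hgap : HasSpectralGap M g) (hg : g ≤ 1) (k : ℕ) (u v : ι) :
    |(M ^ k) u v - (Fintype.card ι : ℝ)⁻¹| ≤ (1 - g) ^ k := by
  have hdecay (w : ι) : centeredSingle w ⬝ᵥ (M ^ k *ᵥ centeredSingle w) ≤ (1 - g) ^ k :=
    calc centeredSingle w ⬝ᵥ (M ^ k *ᵥ centeredSingle w)
        ≤ (1 - g) ^ k * (centeredSingle w ⬝ᵥ centeredSingle w) :=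
          dotProduct_pow_mulVec_le hM hpos hgap hg k (sum_centeredSingle w)
      _ ≤ (1 - g) ^ k := by
          refine mul_le_of_le_one_right (pow_nonneg (sub_nonneg.2 hg) k) ?_
          rw [centeredSingle_dotProduct_self, sub_le_self_iff]
          positivity
  rw [← centeredSingle_dotProduct_mulVec (pow_mem hM k)]
  refine abs_le_of_sq_le_sq ?_ (pow_nonneg (sub_nonneg.2 hg) k)
  calc (centeredSingle u ⬝ᵥ (M ^ k *ᵥ centeredSingle v)) ^ 2
      ≤ (centeredSingle u ⬝ᵥ (M ^ k *ᵥ centeredSingle u)) *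
          (centeredSingle v ⬝ᵥ (M ^ k *ᵥ centeredSingle v)) :=
        sq_dotProduct_mulVec_le_of_posSemidef (hpos.pow k) _ _
    _ ≤ (1 - g) ^ k * (1 - g) ^ k :=
        mul_le_mul (hdecay u) (hdecay v) (dotProduct_pow_mulVec_nonneg hpos k _)
          (pow_nonneg (sub_nonneg.2 hg) k)
    _ = ((1 - g) ^ k) ^ 2 := (sq _).symm

/-- The transition matrix of the lazy version of the Markov chain with transition matrix `P`,
which stays put with probability one half and otherwise takes a step of `P`. -/
def lazyMatrix (P : Matrix ι ι ℝ) : Matrix ι ι ℝ :=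
  (2 : ℝ)⁻¹ • (1 + P)

lemma lazyMatrix_mem_doublyStochastic (hP : P ∈ doublyStochastic ℝ ι) :
    lazyMatrix P ∈ doublyStochastic ℝ ι := by
  rw [lazyMatrix, smul_add]
  exact convex_doublyStochastic (one_mem _) hP (by norm_num) (by norm_num) (by norm_num)

lemma commute_lazyMatrix (P : Matrix ι ι ℝ) : Commute (lazyMatrix P) P :=
  ((Commute.one_left P).add_left (Commute.refl P)).smul_left _

lemma dotProduct_lazyMatrix_mulVec (hP : P ∈ doublyStochastic ℝ ι) (x : ι → ℝ) :
    x ⬝ᵥ (lazyMatrix P *ᵥ x) = 4⁻¹ * ∑ i, ∑ j, P i j * (x i + x j) ^ 2 := by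
  have hrow : ∑ i, ∑ j, P i j * x i ^ 2 = x ⬝ᵥ x := by
    simp only [← sum_mul, sum_row_of_mem_doublyStochastic hP, one_mul, dotProduct, sq]
  have hcol : ∑ i, ∑ j, P i j * x j ^ 2 = x ⬝ᵥ x := by
    rw [sum_comm]
    simp only [← sum_mul, sum_col_of_mem_doublyStochastic hP, one_mul, dotProduct, sq]
  have hcross : ∑ i, ∑ j, P i j * (x i * x j) = x ⬝ᵥ (P *ᵥ x) := by
    simp only [dotProduct, mulVec, mul_sum, mul_left_comm]
  calc x ⬝ᵥ (lazyMatrix P *ᵥ x) = 2⁻¹ * (x ⬝ᵥ x + x ⬝ᵥ (P *ᵥ x)) := by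
        rw [lazyMatrix, smul_mulVec, add_mulVec, one_mulVec, dotProduct_smul, dotProduct_add,
          smul_eq_mul]
    _ = 4⁻¹ * (x ⬝ᵥ x + 2 * (x ⬝ᵥ (P *ᵥ x)) + x ⬝ᵥ x) := by ring
    _ = 4⁻¹ * ∑ i, ∑ j, (P i j * x i ^ 2 + 2 * (P i j * (x i * x j)) + P i j * x j ^ 2) := by
        simp only [sum_add_distrib, ← mul_sum, hrow, hcol, hcross]
    _ = 4⁻¹ * ∑ i, ∑ j, P i j * (x i + x j) ^ 2 := by
        congr! 3 with i _ j
        ring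

lemma posSemidef_lazyMatrix (hP : P ∈ doublyStochastic ℝ ι) (hsymm : P.IsSymm) :
    (lazyMatrix P).PosSemidef := by
  have hlazy : (lazyMatrix P).IsSymm := (isSymm_one.add hsymm).smul _
  refine .of_dotProduct_mulVec_nonneg (isHermitian_iff_isSymm.2 hlazy) fun x => ?_
  rw [star_trivial, dotProduct_lazyMatrix_mulVec hP]
  exact mul_nonneg (by norm_num) <| sum_nonneg fun i _ => sum_nonneg fun j _ =>
    mul_nonneg (nonneg_of_mem_doublyStochastic hP) (sq_nonneg _)

lemma geom_sum_lazyMatrix_mul_one_sub (P : Matrix ι ι ℝ) (K m : ℕ) :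
    (∑ k ∈ range K, lazyMatrix P ^ k) * (1 - P ^ m) =
      (2 : ℝ) • ((1 - lazyMatrix P ^ K) * ∑ j ∈ range m, P ^ j) := by
  have hone_sub : 1 - P = (2 : ℝ) • (1 - lazyMatrix P) := by
    rw [lazyMatrix, smul_sub, smul_inv_smul₀ two_ne_zero, two_smul]
    abel
  rw [← mul_neg_geom_sum, hone_sub, ← mul_assoc, mul_smul_comm, geom_sum_mul_neg, smul_mul_assoc]

lemma geom_sum_lazyMatrix_apply (P : Matrix ι ι ℝ) (K m : ℕ) (u v : ι) :
    ∑ k ∈ range K, (lazyMatrix P ^ k) u v =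
      2 * ∑ j ∈ range m, (P ^ j) u v - 2 * ∑ j ∈ range m, (lazyMatrix P ^ K * P ^ j) u v +
        ∑ k ∈ range K, (lazyMatrix P ^ k * P ^ m) u v := by
  have h := congr_fun₂ (geom_sum_lazyMatrix_mul_one_sub P K m) u v
  simp only [mul_sub, sub_mul, mul_one, one_mul, sum_mul, mul_sum, Matrix.sub_apply,
    Matrix.smul_apply, Matrix.sum_apply, smul_eq_mul] at h
  simp only [mul_sum]
  rw [← sum_sub_distrib, ← h, sub_add_cancel]

lemma sum_lazyMatrix_pow_mul_pow_apply_self_le (hP : P ∈ doublyStochastic ℝ ι) (hsymm : P.IsSymm)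
    (hgap : HasSpectralGap (lazyMatrix P) g) (hg : 0 < g) (K m : ℕ) (v : ι) :
    ∑ k ∈ range K, (lazyMatrix P ^ k * P ^ (2 * m)) v v ≤
      K / (Fintype.card ι : ℝ) + (P ^ (2 * m)) v v / g := by
  set N : ℝ := (Fintype.card ι : ℝ)
  set x := P ^ m *ᵥ centeredSingle v
  have hM := lazyMatrix_mem_doublyStochastic hP
  have hx : ∑ i, x i = 0 := by
    rw [sum_mulVec_of_mem_doublyStochastic (pow_mem hP m), sum_centeredSingle]
  have hform (k : ℕ) :
      x ⬝ᵥ (lazyMatrix P ^ k *ᵥ x) = (lazyMatrix P ^ k * P ^ (2 * m)) v v - N⁻¹ := by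
    rw [mulVec_dotProduct_of_isSymm (hsymm.pow m), mulVec_mulVec, mulVec_mulVec,
      ← ((commute_lazyMatrix P).pow_pow k m).eq, mul_assoc, ← pow_add, ← two_mul,
      centeredSingle_dotProduct_mulVec (mul_mem (pow_mem hM k) (pow_mem hP _))]
  have hself : x ⬝ᵥ x ≤ (P ^ (2 * m)) v v := by
    have h := hform 0
    rw [pow_zero, one_mulVec, one_mul] at h
    rw [h, sub_le_self_iff]
    positivity
  have hsum := sum_dotProduct_pow_mulVec_le hM (posSemidef_lazyMatrix hP hsymm) hgap hg K hx
  simp only [hform, sum_sub_distrib, sum_const, card_range, nsmul_eq_mul, ← div_eq_mul_inv] at hsum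
  linarith [div_le_div_of_nonneg_right hself hg.le]

lemma abs_sum_lazyMatrix_pow_apply_self_sub_le (hP : P ∈ doublyStochastic ℝ ι)
    (hsymm : P.IsSymm) (hgap : HasSpectralGap (lazyMatrix P) g) (hg : 0 < g) {K : ℕ} {a : ℝ}
    (ha : ∀ i j, (lazyMatrix P ^ K) i j ≤ a) (m : ℕ) (v : ι) :
    |∑ k ∈ range K, (lazyMatrix P ^ k) v v - 2 * ∑ j ∈ range (2 * m), (P ^ j) v v| ≤
      4 * m * a + K / (Fintype.card ι : ℝ) + (P ^ (2 * m)) v v / g := by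
  have hM := lazyMatrix_mem_doublyStochastic hP
  have hnonneg (k j : ℕ) : 0 ≤ (lazyMatrix P ^ k * P ^ j) v v :=
    nonneg_of_mem_doublyStochastic (mul_mem (pow_mem hM k) (pow_mem hP j))
  have hmixed : ∑ j ∈ range (2 * m), (lazyMatrix P ^ K * P ^ j) v v ≤ 2 * m * a := by
    simpa using sum_le_card_nsmul (range (2 * m)) _ a fun j _ =>
      mul_apply_le_of_mem_doublyStochastic ha (pow_mem hP j) v v
  have hmixed_nonneg := sum_nonneg fun j (_ : j ∈ range (2 * m)) => hnonneg K j
  have htail := sum_lazyMatrix_pow_mul_pow_apply_self_le hP hsymm hgap hg K m v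
  have htail_nonneg := sum_nonneg fun k (_ : k ∈ range K) => hnonneg k (2 * m)
  rw [geom_sum_lazyMatrix_apply P K (2 * m), abs_le]
  constructor <;> linarith

end DoublyStochastic

end Matrices

section RealEstimates

lemma one_sub_pow_le_inv_pow {N g : ℝ} (hN : 0 < N) (hg : g ≤ 1) {r t : ℕ}
    (h : r * Real.log N ≤ g * t) : (1 - g) ^ t ≤ (N ^ r)⁻¹ :=
  calc (1 - g) ^ t ≤ Real.exp (-g) ^ t :=
        pow_le_pow_left₀ (sub_nonneg.2 hg) (Real.one_sub_le_exp_neg g) t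
    _ = Real.exp (-(g * t)) := by rw [← Real.exp_nat_mul]; ring_nf
    _ ≤ Real.exp (-(r * Real.log N)) := Real.exp_le_exp.2 (neg_le_neg h)
    _ = (N ^ r)⁻¹ := by rw [Real.exp_neg, Real.exp_nat_mul, Real.exp_log hN]

lemma add_mul_div_le_of_pow_mul_le {x L N a b B : ℝ} {r : ℕ} (hx : 1 ≤ x) (hL : 1 ≤ L) (hN : 0 < N)
    (ha : 0 ≤ a) (hb : 0 ≤ b) (hB : x ^ (r + 2) * L ≤ B * N) :
    (a + b * (x ^ r * L)) / N ≤ (a + b) * B / x ^ 2 := by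
  have hxL : 1 ≤ x ^ r * L := one_le_mul_of_one_le_of_one_le (one_le_pow₀ hx) hL
  rw [div_le_div_iff₀ hN (by positivity)]
  calc (a + b * (x ^ r * L)) * x ^ 2 ≤ (a * (x ^ r * L) + b * (x ^ r * L)) * x ^ 2 := by
        gcongr
        exact le_mul_of_one_le_right ha hxL
    _ = (a + b) * (x ^ (r + 2) * L) := by ring
    _ ≤ (a + b) * (B * N) := by gcongr
    _ = (a + b) * B * N := by ring

lemma two_le_of_one_lt_rpow {d : ℕ} {x : ℝ} (h : 1 < (d : ℝ) ^ x) : 2 ≤ d := by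
  contrapose! h
  interval_cases d
  · simpa using Real.zero_rpow_le_one x
  · simp

lemma pow_mul_le_of_le_mul_rpow {x c N L : ℝ} {k : ℕ} (hk : k ≠ 0) (hx : 0 ≤ x) (hN : 0 ≤ N)
    (hL : 0 < L) (h : x ≤ c * (N / L) ^ ((1 : ℝ) / k)) : x ^ k * L ≤ c ^ k * N :=
  calc x ^ k * L ≤ (c * (N / L) ^ ((1 : ℝ) / k)) ^ k * L := by gcongr
    _ = c ^ k * (N / L) * L := by
        rw [mul_pow, one_div, Real.rpow_inv_natCast_pow (by positivity) hk]
    _ = c ^ k * N := by field_simp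

lemma tendsto_rpow_atTop_of_tendsto_rpow_div {ι : Type*} {l : Filter ι} {L d ε : ι → ℝ} {a : ℝ}
    (ha : 0 < a) (hε : ∀ i, 0 < ε i) (hL : Tendsto L l atTop) (hd : ∀ᶠ i in l, 0 < d i)
    (h : Tendsto (fun i => L i ^ (a / ε i) / d i) l (nhds 0)) :
    Tendsto (fun i => d i ^ ε i) l atTop := by
  refine tendsto_atTop_mono' l ?_ ((tendsto_rpow_atTop ha).comp hL)
  filter_upwards [hL.eventually_ge_atTop 0, hd, h.eventually_lt_const one_pos] with i hLi hdi hi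
  calc L i ^ a = (L i ^ (a / ε i)) ^ ε i := by
        rw [← Real.rpow_mul hLi, div_mul_cancel₀ _ (hε i).ne']
    _ ≤ d i ^ ε i :=
        Real.rpow_le_rpow (Real.rpow_nonneg hLi _) ((div_lt_one hdi).1 hi).le (hε i).le

end RealEstimates

section Graphs
variable {W : Type*} {G : SimpleGraph W} {d : ℕ} {ε ρ g : ℝ}

lemma simpleStep_eq_smul_adjMatrix (G : SimpleGraph W) (d : ℕ) :
    simpleStep G d = (d : ℝ)⁻¹ • G.adjMatrix ℝ := by
  ext u v
  simp [simpleStep, SimpleGraph.adjMatrix_apply]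

lemma isSymm_simpleStep (G : SimpleGraph W) (d : ℕ) : (simpleStep G d).IsSymm := by
  rw [simpleStep_eq_smul_adjMatrix]
  exact G.isSymm_adjMatrix.smul _

lemma simpleStep_apply_self (v : W) : simpleStep G d v v = 0 := by
  simp [simpleStep]

lemma simpleStep_mul_mul_pow_le (hd : d ≠ 0) {q C : ℝ} {t : ℕ} {u w' : W} (hq : 0 ≤ q)
    (hC : q * (d : ℝ) ^ ((t + G.dist w' u + 1) / 2) ≤ C) (w : W) :
    simpleStep G d w w' * q * (d : ℝ) ^ ((t + 1 + G.dist w u + 1) / 2) ≤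
      C * (if G.Adj w w' ∧ G.dist w' u ≤ G.dist w u then 1 else 0) + C * simpleStep G d w w' := by
  have hd1 : (1 : ℝ) ≤ d := mod_cast Nat.one_le_iff_ne_zero.2 hd
  have hC0 : 0 ≤ C := le_trans (by positivity) hC
  by_cases hadj : G.Adj w w'
  swap
  · simp [simpleStep, hadj]
  have hstep : simpleStep G d w w' = (d : ℝ)⁻¹ := by simp [simpleStep, hadj]
  have hdist : G.dist w u ≤ G.dist w' u + 1 := by
    have := hadj.diff_dist_adj (u := u)
    grind [G.dist_comm]
  rw [hstep]
  by_cases hle : G.dist w' u ≤ G.dist w u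
  · rw [if_pos ⟨hadj, hle⟩, mul_one]
    calc (d : ℝ)⁻¹ * q * (d : ℝ) ^ ((t + 1 + G.dist w u + 1) / 2)
        ≤ (d : ℝ)⁻¹ * q * (d : ℝ) ^ ((t + G.dist w' u + 1) / 2 + 1) := by
          gcongr _ * ?_
          exact pow_le_pow_right₀ hd1 (by omega)
      _ = q * (d : ℝ) ^ ((t + G.dist w' u + 1) / 2) := by
          field_simp
          ring
      _ ≤ C + C * (d : ℝ)⁻¹ := hC.trans (le_add_of_nonneg_right (by positivity))
  · rw [if_neg (fun h => hle h.2), mul_zero, zero_add, mul_assoc, mul_comm C]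
    refine mul_le_mul_of_nonneg_left (le_trans ?_ hC) (by positivity)
    gcongr q * ?_
    exact pow_le_pow_right₀ hd1 (by omega)

lemma lazyStep_eq_lazyMatrix [DecidableEq W] (G : SimpleGraph W) (d : ℕ) :
    lazyStep G d = lazyMatrix (simpleStep G d) := by
  ext u v
  simp [lazyStep, lazyMatrix, simpleStep, Matrix.one_apply, mul_add]

variable [Fintype W]

lemma PropP3.card_adj_dist_le (h : PropP3 G d ε ρ) (hρ : 0 ≤ ρ) {K : ℕ}
    (hK : (K : ℝ) ≤ (d : ℝ) ^ ε) {u w : W} (hw : G.dist w u ≤ K) :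
    (#{w' | G.Adj w w' ∧ G.dist w' u ≤ G.dist w u} : ℝ) ≤ ρ * K := by
  rw [G.dist_comm] at hw ⊢
  have hw' : (G.dist u w : ℝ) ≤ K := mod_cast hw
  exact (h u w (hw'.trans hK)).trans (by gcongr)

lemma lt_card_of_isRegularOfDegree (hreg : G.IsRegularOfDegree d) (v : W) :
    d < Fintype.card W :=
  hreg v ▸ G.degree_lt_card_verts v

variable [DecidableEq W]

lemma hasSpectralGap_of_spectralGapLB (h : SpectralGapLB G d g) :
    HasSpectralGap (lazyStep G d) g := by
  intro x hx
  simpa only [dotProduct, Matrix.mulVec, mul_sum, mul_assoc, sq] using h x hx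

lemma simpleStep_mem_doublyStochastic (hd : d ≠ 0) (hreg : G.IsRegularOfDegree d) :
    simpleStep G d ∈ doublyStochastic ℝ W := by
  have hrow (u : W) : ∑ v, simpleStep G d u v = 1 := by
    simp only [simpleStep, Matrix.of_apply, ← sum_filter, ← SimpleGraph.neighborFinset_eq_filter,
      sum_const, SimpleGraph.card_neighborFinset_eq_degree, hreg u, nsmul_eq_mul]
    exact mul_inv_cancel₀ (Nat.cast_ne_zero.2 hd)
  refine mem_doublyStochastic_iff_sum.2 ⟨fun u v => ?_, hrow, fun v => ?_⟩
  · simp only [simpleStep, Matrix.of_apply]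
    positivity
  · simpa only [(isSymm_simpleStep G d).apply] using hrow v

lemma simpleStep_sq_apply_self (hd : d ≠ 0) (hreg : G.IsRegularOfDegree d) (v : W) :
    (simpleStep G d ^ 2) v v = (d : ℝ)⁻¹ := by
  rw [simpleStep_eq_smul_adjMatrix, smul_pow, sq (G.adjMatrix ℝ), Matrix.smul_apply,
    G.adjMatrix_mul_self_apply_self, hreg v, smul_eq_mul]
  field_simp

lemma simpleStep_pow_apply_eq_zero_of_lt_dist {t : ℕ} {u v : W} (ht : t < G.dist u v) :
    (simpleStep G d ^ t) u v = 0 := by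
  have : IsEmpty {p : G.Walk u v | p.length = t} :=
    ⟨fun p => ht.not_ge (p.2 ▸ G.dist_le p.1)⟩
  rw [simpleStep_eq_smul_adjMatrix, smul_pow, Matrix.smul_apply,
    G.adjMatrix_pow_apply_eq_card_walk, Fintype.card_eq_zero, Nat.cast_zero, smul_zero]

-- The exponent `⌈(t + dist w u) / 2⌉` is the least number of steps not leading away from `u` in a
-- walk of length `t` from `w` to `u`. Near `u` such steps have total probability at
-- most `a / d`.
lemma simpleStep_pow_apply_mul_pow_le (hd : d ≠ 0) (hreg : G.IsRegularOfDegree d) {K : ℕ} {u : W}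
    {a : ℝ} (hcount : ∀ w, G.dist w u ≤ K →
      (#{w' | G.Adj w w' ∧ G.dist w' u ≤ G.dist w u} : ℝ) ≤ a) {t : ℕ} (ht : t ≤ K) (w : W) :
    (simpleStep G d ^ t) w u * (d : ℝ) ^ ((t + G.dist w u + 1) / 2) ≤ (1 + a) ^ t := by
  have hP := simpleStep_mem_doublyStochastic hd hreg
  have ha : 0 ≤ a := (Nat.cast_nonneg _).trans (hcount u (by simp))
  induction t generalizing w with
  | zero =>
    rcases eq_or_ne w u with rfl | hwu
    · simp
    · simp [hwu]
  | succ t ih =>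
    obtain hfar | hnear := lt_or_ge (t + 1) (G.dist w u)
    · rw [simpleStep_pow_apply_eq_zero_of_lt_dist hfar, zero_mul]
      positivity
    calc (simpleStep G d ^ (t + 1)) w u * (d : ℝ) ^ ((t + 1 + G.dist w u + 1) / 2)
        = ∑ w', simpleStep G d w w' * (simpleStep G d ^ t) w' u *
            (d : ℝ) ^ ((t + 1 + G.dist w u + 1) / 2) := by
          rw [pow_succ', Matrix.mul_apply, sum_mul]
      _ ≤ ∑ w', ((1 + a) ^ t * (if G.Adj w w' ∧ G.dist w' u ≤ G.dist w u then 1 else 0) +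
            (1 + a) ^ t * simpleStep G d w w') := by
          gcongr with w'
          exact simpleStep_mul_mul_pow_le hd (nonneg_of_mem_doublyStochastic (pow_mem hP t))
            (ih (by omega) w') w
      _ = (1 + a) ^ t * (#{w' | G.Adj w w' ∧ G.dist w' u ≤ G.dist w u} + 1) := by
          rw [sum_add_distrib, ← mul_sum, ← mul_sum, sum_row_of_mem_doublyStochastic hP, sum_boole,
            mul_add]
      _ ≤ (1 + a) ^ t * (a + 1) := by
          gcongr
          exact hcount w (hnear.trans ht)
      _ = (1 + a) ^ (t + 1) := by rw [pow_succ, add_comm a]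

lemma simpleStep_pow_apply_self_le (hd : d ≠ 0) (hreg : G.IsRegularOfDegree d)
    (h3 : PropP3 G d ε ρ) (hρ : 0 ≤ ρ) {K t : ℕ} (hK : (K : ℝ) ≤ (d : ℝ) ^ ε) (ht : t ≤ K)
    (v : W) :
    (simpleStep G d ^ t) v v ≤ (1 + ρ * K) ^ K / (d : ℝ) ^ ((t + 1) / 2) := by
  have h := simpleStep_pow_apply_mul_pow_le hd hreg (u := v)
    (fun _ => h3.card_adj_dist_le hρ hK) ht v
  rw [G.dist_self, add_zero] at h
  rw [le_div_iff₀ (by positivity)]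
  exact h.trans (pow_le_pow_right₀ (le_add_of_nonneg_right (by positivity)) ht)

lemma abs_sum_simpleStep_pow_apply_self_sub_le (hd : d ≠ 0) (hreg : G.IsRegularOfDegree d)
    (h3 : PropP3 G d ε ρ) (hρ : 0 ≤ ρ) {K : ℕ} (hK : (K : ℝ) ≤ (d : ℝ) ^ ε) (hK3 : 3 ≤ K)
    (v : W) :
    |∑ j ∈ range K, (simpleStep G d ^ j) v v - 1 - 1 / d| ≤
      K * ((1 + ρ * K) ^ K / (d : ℝ) ^ 2) := by
  have hd1 : (1 : ℝ) ≤ d := mod_cast Nat.one_le_iff_ne_zero.2 hd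
  have hsum : ∑ j ∈ range K, (simpleStep G d ^ j) v v - 1 - 1 / d =
      ∑ j ∈ Ico 3 K, (simpleStep G d ^ j) v v := by
    rw [← sum_range_add_sum_Ico _ hK3]
    simp [sum_range_succ, simpleStep_apply_self, simpleStep_sq_apply_self hd hreg]
    ring
  have hterm (j : ℕ) (hj : j ∈ Ico 3 K) :
      (simpleStep G d ^ j) v v ≤ (1 + ρ * K) ^ K / (d : ℝ) ^ 2 := by
    obtain ⟨hj3, hjK⟩ := mem_Ico.1 hj
    refine (simpleStep_pow_apply_self_le hd hreg h3 hρ hK hjK.le v).trans ?_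
    gcongr _ / ?_
    exact pow_le_pow_right₀ hd1 (by omega)
  have hnonneg : 0 ≤ ∑ j ∈ Ico 3 K, (simpleStep G d ^ j) v v := sum_nonneg fun j _ =>
    nonneg_of_mem_doublyStochastic (pow_mem (simpleStep_mem_doublyStochastic hd hreg) j)
  rw [hsum, abs_of_nonneg hnonneg]
  refine (sum_le_card_nsmul _ _ _ hterm).trans ?_
  rw [Nat.card_Ico, nsmul_eq_mul]
  gcongr
  omega

lemma abs_lazyStep_pow_apply_sub_le [Nontrivial W] (hd : d ≠ 0) (hreg : G.IsRegularOfDegree d)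
    (hgap : HasSpectralGap (lazyStep G d) g) {t : ℕ}
    (ht : 3 * Real.log (Fintype.card W) ≤ g * t) (x y : W) :
    |(lazyStep G d ^ t) x y - (Fintype.card W : ℝ)⁻¹| ≤ ((Fintype.card W : ℝ) ^ 3)⁻¹ := by
  have hP := simpleStep_mem_doublyStochastic hd hreg
  have hpos := posSemidef_lazyMatrix hP (isSymm_simpleStep G d)
  rw [lazyStep_eq_lazyMatrix] at hgap ⊢
  have hg1 := hgap.le_one hpos
  have hmix := abs_pow_apply_sub_inv_card_le (lazyMatrix_mem_doublyStochastic hP) hpos hgap hg1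
  exact (hmix t x y).trans (one_sub_pow_le_inv_pow (mod_cast Fintype.card_pos) hg1 (mod_cast ht))

lemma ceil_mem_mixingTime_set [Nontrivial W] (hd : d ≠ 0) (hreg : G.IsRegularOfDegree d)
    (hgap : HasSpectralGap (lazyStep G d) g) (hg : 0 < g) :
    ⌈3 * Real.log (Fintype.card W) / g⌉₊ ∈ {T : ℕ | 1 ≤ T ∧ ∀ x y : W,
      |(lazyStep G d ^ T) x y - (Fintype.card W : ℝ)⁻¹| ≤ ((Fintype.card W : ℝ) ^ 3)⁻¹} := by
  have hlog : 0 < Real.log (Fintype.card W) := Real.log_pos (mod_cast Fintype.one_lt_card)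
  refine ⟨Nat.one_le_ceil_iff.2 (by positivity), abs_lazyStep_pow_apply_sub_le hd hreg hgap ?_⟩
  rw [← div_le_iff₀' hg]
  exact Nat.le_ceil _

lemma mixingTime_le [Nontrivial W] (hd : d ≠ 0) (hreg : G.IsRegularOfDegree d)
    (hgap : HasSpectralGap (lazyStep G d) g) (hg : 0 < g) :
    (mixingTime G d : ℝ) ≤ 3 * Real.log (Fintype.card W) / g + 1 := by
  have hlog : 0 < Real.log (Fintype.card W) := Real.log_pos (mod_cast Fintype.one_lt_card)
  calc (mixingTime G d : ℝ) ≤ ⌈3 * Real.log (Fintype.card W) / g⌉₊ :=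
        Nat.cast_le.2 (Nat.sInf_le (ceil_mem_mixingTime_set hd hreg hgap hg))
    _ ≤ 3 * Real.log (Fintype.card W) / g + 1 := (Nat.ceil_lt_add_one (by positivity)).le

lemma lazyStep_pow_mixingTime_succ_apply_le [Nontrivial W] (hd : d ≠ 0)
    (hreg : G.IsRegularOfDegree d) (hgap : HasSpectralGap (lazyStep G d) g) (hg : 0 < g) (x y : W) :
    (lazyStep G d ^ (mixingTime G d + 1)) x y ≤ 2 / (Fintype.card W : ℝ) := by
  have hcard : (1 : ℝ) ≤ Fintype.card W := mod_cast Fintype.card_pos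
  have hM : lazyStep G d ∈ doublyStochastic ℝ W := by
    rw [lazyStep_eq_lazyMatrix]
    exact lazyMatrix_mem_doublyStochastic (simpleStep_mem_doublyStochastic hd hreg)
  have hmixed := (Nat.sInf_mem ⟨_, ceil_mem_mixingTime_set hd hreg hgap hg⟩).2
  rw [pow_succ]
  refine mul_apply_le_of_mem_doublyStochastic (fun i j => ?_) hM x y
  have hcube : ((Fintype.card W : ℝ) ^ 3)⁻¹ ≤ (Fintype.card W : ℝ)⁻¹ :=
    inv_anti₀ (by positivity) (le_self_pow₀ hcard three_ne_zero)
  calc (lazyStep G d ^ mixingTime G d) i j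
      ≤ ((Fintype.card W : ℝ) ^ 3)⁻¹ + (Fintype.card W : ℝ)⁻¹ :=
        sub_le_iff_le_add.1 (abs_le.1 (hmixed i j)).2
    _ ≤ 2 / (Fintype.card W : ℝ) := by
        rw [div_eq_mul_inv, two_mul]
        gcongr

lemma mixingTime_error_le [Nontrivial W] (hd : d ≠ 0) (hreg : G.IsRegularOfDegree d) {r : ℕ}
    {a c B : ℝ} (ha : 0 ≤ a) (hc : 0 < c) (hgap : HasSpectralGap (lazyStep G d) (c / (d : ℝ) ^ r))
    (hlog : 1 ≤ Real.log (Fintype.card W))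
    (hB : (d : ℝ) ^ (r + 2) * Real.log (Fintype.card W) ≤ B * Fintype.card W) :
    a * (2 / (Fintype.card W : ℝ)) + ((mixingTime G d + 1 : ℕ) : ℝ) / (Fintype.card W : ℝ) ≤
      (2 * a + 2 + 3 / c) * B / (d : ℝ) ^ 2 := by
  have hd1 : (1 : ℝ) ≤ d := mod_cast Nat.one_le_iff_ne_zero.2 hd
  have hcard : (0 : ℝ) < Fintype.card W := mod_cast Fintype.card_pos
  have hT := mixingTime_le hd hreg hgap (by positivity)
  refine le_trans ?_
    (add_mul_div_le_of_pow_mul_le hd1 hlog hcard (by positivity) (by positivity) hB)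
  rw [mul_div_assoc', ← add_div]
  gcongr ?_ / _
  calc a * 2 + ((mixingTime G d + 1 : ℕ) : ℝ)
      ≤ a * 2 + (3 * Real.log (Fintype.card W) / (c / (d : ℝ) ^ r) + 1 + 1) := by
        push_cast
        gcongr
    _ = 2 * a + 2 + 3 / c * ((d : ℝ) ^ r * Real.log (Fintype.card W)) := by
        field_simp
        ring

lemma simpleStep_pow_apply_self_div_le (hd : d ≠ 0) (hreg : G.IsRegularOfDegree d)
    (h3 : PropP3 G d ε ρ) (hρ : 0 ≤ ρ) {r K : ℕ} (hrK : 2 * (r + 2) ≤ K)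
    (hK : (K : ℝ) ≤ (d : ℝ) ^ ε) {c : ℝ} (hc : 0 < c) (v : W) :
    (simpleStep G d ^ K) v v / (c / (d : ℝ) ^ r) ≤ 1 / c * ((1 + ρ * K) ^ K / (d : ℝ) ^ 2) := by
  have hd1 : (1 : ℝ) ≤ d := mod_cast Nat.one_le_iff_ne_zero.2 hd
  calc (simpleStep G d ^ K) v v / (c / (d : ℝ) ^ r)
      ≤ (1 + ρ * K) ^ K / (d : ℝ) ^ (r + 2) / (c / (d : ℝ) ^ r) := by
        gcongr
        refine (simpleStep_pow_apply_self_le hd hreg h3 hρ hK le_rfl v).trans ?_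
        gcongr _ / ?_
        exact pow_le_pow_right₀ hd1 (by omega)
    _ = 1 / c * ((1 + ρ * K) ^ K / (d : ℝ) ^ 2) := by
        field_simp
        ring

lemma abs_sum_lazyStep_pow_apply_self_sub_le (hd : 2 ≤ d) (hreg : G.IsRegularOfDegree d)
    (h3 : PropP3 G d ε ρ) (hρ : 0 ≤ ρ) {r K : ℕ} (hrK : K = 2 * (r + 2))
    (hK : (K : ℝ) ≤ (d : ℝ) ^ ε) {c B : ℝ} (hc : 0 < c)
    (hgap : HasSpectralGap (lazyStep G d) (c / (d : ℝ) ^ r))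
    (hB : (d : ℝ) ^ (r + 2) * Real.log (Fintype.card W) ≤ B * Fintype.card W) (v : W) :
    |∑ k ∈ range (mixingTime G d + 1), (lazyStep G d ^ k) v v - 2 - 2 / d| ≤
      ((2 * K + 1 / c) * (1 + ρ * K) ^ K + (4 * K + 2 + 3 / c) * B) / (d : ℝ) ^ 2 := by
  have hd0 : d ≠ 0 := by omega
  have hcard : 3 ≤ Fintype.card W := hd.trans_lt (lt_card_of_isRegularOfDegree hreg v)
  have : Nontrivial W := Fintype.one_lt_card_iff_nontrivial.1 (by omega)
  have hlog : 1 ≤ Real.log (Fintype.card W) := by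
    rw [Real.le_log_iff_exp_le (by positivity)]
    exact Real.exp_one_lt_three.le.trans (mod_cast hcard)
  have hg : 0 < c / (d : ℝ) ^ r := by positivity
  have htail := simpleStep_pow_apply_self_div_le hd0 hreg h3 hρ hrK.ge hK hc v
  have hmix := mixingTime_error_le hd0 hreg (a := 2 * K) (by positivity) hc hgap hlog hB
  have hmixed := lazyStep_pow_mixingTime_succ_apply_le hd0 hreg hgap hg
  have hreturns := abs_sum_simpleStep_pow_apply_self_sub_le hd0 hreg h3 hρ hK (by omega) v
  rw [lazyStep_eq_lazyMatrix] at hgap hmixed ⊢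
  have hgreen := abs_sum_lazyMatrix_pow_apply_self_sub_le (simpleStep_mem_doublyStochastic hd0 hreg)
    (isSymm_simpleStep G d) hgap hg hmixed (r + 2) v
  rw [← hrK] at hgreen
  have hcast : (4 : ℝ) * (r + 2 : ℕ) = 2 * K := by
    rw [hrK]
    push_cast
    ring
  rw [hcast] at hgreen
  have hconst : ((2 * K + 1 / c) * (1 + ρ * K) ^ K + (4 * K + 2 + 3 / c) * B) / (d : ℝ) ^ 2 =
      2 * (K * ((1 + ρ * K) ^ K / (d : ℝ) ^ 2)) + 1 / c * ((1 + ρ * K) ^ K / (d : ℝ) ^ 2) +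
        (2 * (2 * K) + 2 + 3 / c) * B / (d : ℝ) ^ 2 := by
    ring
  have htwo : (2 : ℝ) / d = 2 * (1 / d) := by ring
  rw [hconst, htwo]
  rw [abs_le] at hgreen hreturns ⊢
  constructor <;> linarith

end Graphs

lemma exists_abs_sum_lazyStep_pow_apply_self_sub_le (r : ℕ) {c₁ ρ₁ c₂ ρ₂ : ℝ} (hc₁ : 0 < c₁)
    (hρ₁ : ρ₁ ≤ r) (hc₂ : 0 ≤ c₂) (hρ₂ : 0 ≤ ρ₂) :
    ∃ C : ℝ, 0 < C ∧ ∀ {W : Type*} [Fintype W] [DecidableEq W] {G : SimpleGraph W} {d : ℕ} {ε : ℝ},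
      G.IsRegularOfDegree d → SpectralGapLB G d (c₁ / (d : ℝ) ^ ρ₁) → PropP3 G d ε ρ₂ →
      (d : ℝ) ≤ c₂ * (Fintype.card W / Real.log (Fintype.card W)) ^ ((1 : ℝ) / (r + 2 : ℕ)) →
      ((2 * (r + 2) : ℕ) : ℝ) ≤ (d : ℝ) ^ ε → ∀ v,
        |∑ k ∈ range (mixingTime G d + 1), (lazyStep G d ^ k) v v - 2 - 2 / d| ≤
          C / (d : ℝ) ^ 2 := by
  set K := 2 * (r + 2) with hrK
  refine ⟨(2 * K + 1 / c₁) * (1 + ρ₂ * K) ^ K + (4 * K + 2 + 3 / c₁) * c₂ ^ (r + 2),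
    by positivity, fun {W _ _ G d ε} hreg hgap h3 hdN hK v => ?_⟩
  have hd : 2 ≤ d := two_le_of_one_lt_rpow (lt_of_lt_of_le (by norm_cast; omega) hK)
  have hcard : 1 < Fintype.card W := by
    have := lt_card_of_isRegularOfDegree hreg v
    omega
  have hpow : (d : ℝ) ^ ρ₁ ≤ (d : ℝ) ^ r := by
    rw [← Real.rpow_natCast]
    exact Real.rpow_le_rpow_of_exponent_le (mod_cast one_le_two.trans hd) hρ₁
  have hgap' : HasSpectralGap (lazyStep G d) (c₁ / (d : ℝ) ^ r) :=
    (hasSpectralGap_of_spectralGapLB hgap).mono (by gcongr)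
  have hB := pow_mul_le_of_le_mul_rpow (by omega) (Nat.cast_nonneg d) (Nat.cast_nonneg _)
    (Real.log_pos (mod_cast hcard)) hdN
  exact abs_sum_lazyStep_pow_apply_self_sub_le hd hreg h3 hρ₂ hrK hK hc₁ hgap' hB v

theorem expected_returns_estimate_general {ι : Type*} {l : Filter ι} {W : ι → Type*}
    [∀ i, Fintype (W i)] [∀ i, DecidableEq (W i)] (G : ∀ i, SimpleGraph (W i)) (d : ι → ℕ)
    (ε : ι → ℝ) (r : ℕ) {a : ℝ} (ha : 0 < a)
    (hW : Tendsto (fun i => (Fintype.card (W i) : ℝ)) l atTop)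
    (hreg : ∀ i, (G i).IsRegularOfDegree (d i)) (hd : ∀ᶠ i in l, 0 < (d i : ℝ))
    (hε : ∀ i, 0 < ε i)
    (hP1 : ∃ c₁ ρ₁ : ℝ, 0 < c₁ ∧ ρ₁ ≤ r ∧
      ∀ i, SpectralGapLB (G i) (d i) (c₁ / (d i : ℝ) ^ ρ₁))
    (hP2a : Tendsto (fun i => Real.log (Real.log (Fintype.card (W i))) ^ (a / ε i) / (d i : ℝ))
      l (nhds 0))
    (hP2b : ∃ c₂ : ℝ, 0 ≤ c₂ ∧ ∀ᶠ i in l, (d i : ℝ) ≤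
      c₂ * (Fintype.card (W i) / Real.log (Fintype.card (W i))) ^ ((1 : ℝ) / (r + 2 : ℕ)))
    (hP3 : ∃ ρ₂ : ℝ, 0 ≤ ρ₂ ∧ ∀ i, PropP3 (G i) (d i) (ε i) ρ₂) :
    ∃ C : ℝ, 0 < C ∧ ∀ᶠ i in l, ∀ v : W i,
      |∑ k ∈ range (mixingTime (G i) (d i) + 1), (lazyStep (G i) (d i) ^ k) v v - 2 - 2 / d i| ≤
        C / (d i : ℝ) ^ 2 := by
  obtain ⟨c₁, ρ₁, hc₁, hρ₁, hgap⟩ := hP1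
  obtain ⟨c₂, hc₂, hdW⟩ := hP2b
  obtain ⟨ρ₂, hρ₂, h3⟩ := hP3
  obtain ⟨C, hC, hbound⟩ := exists_abs_sum_lazyStep_pow_apply_self_sub_le r hc₁ hρ₁ hc₂ hρ₂
  have hloglog := Real.tendsto_log_atTop.comp (Real.tendsto_log_atTop.comp hW)
  have hdε := tendsto_rpow_atTop_of_tendsto_rpow_div ha hε hloglog hd hP2a
  refine ⟨C, hC, ?_⟩
  filter_upwards [hdW, hdε.eventually_ge_atTop ((2 * (r + 2) : ℕ) : ℝ)] with i hdi hK
  exact hbound (hreg i) (hgap i) (h3 i) hdi hK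

/-- **Lemma 4(i)**: for a sequence of connected `d`-regular graphs satisfying
P1, P2, P3, the expected number `R_v` of visits to `v` within the mixing time
by the lazy walk started at `v` satisfies `R_v = 2 + 2/d + O(1/d²)`, uniformly
in `v`.  (The `n`-th graph of the sequence has `n + 1` vertices.) -/
theorem expected_returns_estimate
    (G : ∀ n : ℕ, SimpleGraph (Fin (n + 1))) (d : ℕ → ℕ) (ε : ℕ → ℝ)
    (hreg : ∀ n, (G n).IsRegularOfDegree (d n))
    (hconn : ∀ n, (G n).Connected)
    (hd : Tendsto (fun n => (d n : ℝ)) atTop atTop)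
    (hε : ∀ n, 0 < ε n ∧ ε n < 1)
    (hP1 : ∃ c₁ ρ₁ : ℝ, 0 < c₁ ∧ 0 < ρ₁ ∧ ρ₁ ≤ 3 ∧
      ∀ n, SpectralGapLB (G n) (d n) (c₁ / (d n : ℝ) ^ ρ₁))
    (hP2a : Tendsto (fun n : ℕ => Real.log (Real.log ((n : ℝ) + 1)) ^ (2 / ε n) / (d n : ℝ))
      atTop (nhds 0))
    (hP2b : ∃ c₂ : ℝ, 0 < c₂ ∧ ∀ n, 1 ≤ n →
      (d n : ℝ) ≤ c₂ * (((n : ℝ) + 1) / Real.log ((n : ℝ) + 1)) ^ ((1 : ℝ) / 5))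
    (hP3 : ∃ ρ₂ : ℝ, 0 < ρ₂ ∧ ∀ n, PropP3 (G n) (d n) (ε n) ρ₂)
    :
    ∃ C : ℝ, 0 < C ∧ ∃ n₀ : ℕ, ∀ n, n₀ ≤ n → ∀ v : Fin (n + 1),
      |(∑ k ∈ Finset.range (mixingTime (G n) (d n) + 1),
          ((lazyStep (G n) (d n)) ^ k) v v) - 2 - 2 / (d n : ℝ)| ≤
        C / (d n : ℝ) ^ 2 := by
  have hcard (n : ℕ) : (Fintype.card (Fin (n + 1)) : ℝ) = n + 1 := by simp
  obtain ⟨c₁, ρ₁, hc₁, -, hρ₁, hgap⟩ := hP1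
  obtain ⟨c₂, hc₂, hdn⟩ := hP2b
  obtain ⟨ρ₂, hρ₂, h3⟩ := hP3
  obtain ⟨C, hC, hbound⟩ := expected_returns_estimate_general G d ε 3 two_pos
    (by simpa only [hcard] using tendsto_atTop_add_const_right _ 1 tendsto_natCast_atTop_atTop)
    hreg (hd.eventually_gt_atTop 0) (fun n => (hε n).1) ⟨c₁, ρ₁, hc₁, hρ₁, hgap⟩
    (by simpa only [hcard] using hP2a)
    ⟨c₂, hc₂.le, (eventually_ge_atTop 1).mono
      (by simpa only [hcard, Nat.reduceAdd, Nat.cast_ofNat] using hdn)⟩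
    ⟨ρ₂, hρ₂.le, h3⟩
  exact ⟨C, hC, eventually_atTop.1 hbound⟩

end
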